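/- arXiv:2507.18434 — 2 statements merged into one kernel-verified Lean document; each statement's English description precedes it below -/
import Mathlib

section
/- Fix n ≥ 1 and a subset X = {x_1 < ⋯ < x_s} ⊆ [n]. Then the number of permutations σ ∈ S_n with DT(σ) = X equals Σ_{J ⊆ X} (−1)^{|X ∖ J|} · α(J)!̂, where for an ordered set J = {j_1 < ⋯ < j_k} one sets α(J) = (j_1 − 1, j_2 − j_1, …, j_k − j_{k−1}) and, for a tuple β = (β_1,…,β_k), β!̂ = (k+1)^{β_1} · k^{β_2} · ⋯ · 3^{β_{k−1}} · 2^{β_k} (with the convention that the empty tuple gives 1). -/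
/-!
By inclusion–exclusion over the subsets `J ⊆ X`, it suffices to show that the number of
permutations with `DT σ ⊆ J` is `α(J)!̂`.

Both sides equal `∏_{m=1}^{n} (1 + #{j ∈ J : j > m})`. For `α(J)!̂` this is a regrouping: on the
block `j_i ≤ m < j_{i+1}` the factor is constant, and for `m ≥ j_k` it is `1`
(`hatFactorial_eq_prod`). For the permutations, build the word by inserting the values
`n, n-1, …, 1` in decreasing order (`insMin`, `card_good`). The inserted value `m` is smaller than
everything present, so it is never a descent top itself, it turns the letter on its left into a
descent top, and it changes no other letter. Hence `m` may be put at the front or directly after an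
element of `J` exceeding `m`, which gives `1 + #{j ∈ J : j > m}` choices (`good_insMin`).
-/

/-- The descent top set of a permutation `σ` of `{0,…,n-1}`, recorded with one-based values:
`DT(σ) = {σ(i) : σ(i) > σ(i+1)} ⊆ {1,…,n}` (values shifted by `+1` to be one-based). -/
def DT {n : ℕ} (σ : Equiv.Perm (Fin n)) : Finset ℕ :=
  Finset.image (fun i => (σ i : ℕ) + 1)
    (Finset.univ.filter fun i : Fin n => ∃ j : Fin n, (j : ℕ) = (i : ℕ) + 1 ∧ σ j < σ i)

/-- For `J = {j_1 < ⋯ < j_k} ⊆ ℕ`, the quantity `α(J)!̂ = (k+1)^{j_1-1}·k^{j_2-j_1}·⋯·2^{j_k-j_{k-1}}`,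
where `α(J) = (j_1 − 1, j_2 − j_1, …, j_k − j_{k−1})` and, for a tuple `β = (β_1,…,β_k)`,
`β!̂ = (k+1)^{β_1}·k^{β_2}·⋯·2^{β_k}` (an empty tuple gives `1`). -/
def hatFactorial (J : Finset ℕ) : ℕ :=
  ∏ i ∈ Finset.range J.card,
    (J.card + 1 - i) ^ ((1 :: J.sort (· ≤ ·)).getD (i + 1) 0 - (1 :: J.sort (· ≤ ·)).getD i 0)

/-! ### Insertion of a minimal value -/

/-- All descent tops of `σ` (zero-based values) satisfy `Q`. -/
def Good {n : ℕ} (Q : ℕ → Prop) (σ : Equiv.Perm (Fin n)) : Prop :=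
  ∀ i j : Fin n, (j : ℕ) = (i : ℕ) + 1 → σ j < σ i → Q (σ i)

/-- The permutation obtained from `σ` by raising all values by one and inserting the new
minimal value `0` at position `p`. -/
def insMin {n : ℕ} (p : Fin (n + 1)) (σ : Equiv.Perm (Fin n)) : Equiv.Perm (Fin (n + 1)) :=
  ((finSuccEquiv' p).trans (Equiv.optionCongr σ)).trans (finSuccEquiv' 0).symm

lemma insMin_self {n : ℕ} (p : Fin (n + 1)) (σ : Equiv.Perm (Fin n)) : insMin p σ p = 0 := by
  simp [insMin]

lemma insMin_succAbove {n : ℕ} (p : Fin (n + 1)) (σ : Equiv.Perm (Fin n)) (i : Fin n) :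
    insMin p σ (p.succAbove i) = (σ i).succ := by
  simp [insMin]

lemma insMin_bijective (n : ℕ) :
    Function.Bijective
      (fun x : Fin (n + 1) × Equiv.Perm (Fin n) => insMin x.1 x.2) := by
  rw [Fintype.bijective_iff_injective_and_card]
  constructor
  · rintro ⟨p, σ⟩ ⟨q, τ⟩ h
    simp only at h
    have hpq : p = q := by
      have h1 : insMin q τ p = insMin q τ q := by rw [← h, insMin_self, h, insMin_self]
      exact (insMin q τ).injective h1
    subst hpq
    have : σ = τ := by
      ext i
      have h1 := insMin_succAbove p σ i
      rw [h, insMin_succAbove] at h1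
      rw [Fin.succ_injective _ h1]
    rw [this]
  · simp [Fintype.card_perm, Nat.factorial_succ]

lemma val_succAbove {n : ℕ} (p : Fin (n + 1)) (i : Fin n) :
    ((p.succAbove i : Fin (n + 1)) : ℕ) = if (i : ℕ) < p then (i : ℕ) else i + 1 := by
  rw [Fin.succAbove]
  split_ifs <;> simp_all [Fin.lt_def]

/-- Inserting the minimum at position `p` adds exactly one requirement: the letter to the left
of the new one, if there is any, becomes a descent top and must be allowed. -/
lemma good_insMin {n : ℕ} (Q : ℕ → Prop) (p : Fin (n + 1)) (σ : Equiv.Perm (Fin n)) :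
    Good Q (insMin p σ) ↔
      Good (fun v => Q (v + 1)) σ ∧ ∀ i : Fin n, p = i.succ → Q (σ i + 1) := by
  constructor
  · intro h
    have h2 : ∀ i : Fin n, p = i.succ → Q (σ i + 1) := by
      intro i hp
      have := h (p.succAbove i) p (by rw [val_succAbove, hp]; simp)
        (by rw [insMin_self, insMin_succAbove]; exact Fin.succ_pos _)
      rw [insMin_succAbove] at this
      simpa using this
    refine ⟨fun i j hij hlt => ?_, h2⟩
    by_cases hp : p = i.succ
    · exact h2 i hp
    · have hp' : (p : ℕ) ≠ i + 1 := fun h => hp (Fin.ext (by simpa using h))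
      have := h (p.succAbove i) (p.succAbove j)
        (by rw [val_succAbove, val_succAbove]; split_ifs <;> omega)
        (by rw [insMin_succAbove, insMin_succAbove]; exact Fin.succ_lt_succ_iff.mpr hlt)
      rw [insMin_succAbove] at this
      simpa using this
  · rintro ⟨h1, h2⟩ i' j' hij hlt
    have hi : i' ≠ p := by
      rintro rfl
      rw [insMin_self] at hlt
      exact absurd hlt (Fin.not_lt_zero _)
    obtain ⟨i, rfl⟩ := Fin.exists_succAbove_eq hi
    rw [insMin_succAbove, Fin.val_succ]
    by_cases hj : j' = p
    · subst hj
      apply h2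
      rw [val_succAbove] at hij
      ext
      rw [Fin.val_succ]
      split_ifs at hij <;> omega
    · obtain ⟨j, rfl⟩ := Fin.exists_succAbove_eq hj
      rw [insMin_succAbove, insMin_succAbove, Fin.succ_lt_succ_iff] at hlt
      refine h1 i j ?_ hlt
      have hne : (i : ℕ) ≠ j := by
        rintro h
        rw [Fin.ext h] at hlt
        exact lt_irrefl _ hlt
      rw [val_succAbove, val_succAbove] at hij
      split_ifs at hij <;> omega

open Classical in
lemma card_positions {n : ℕ} (Q : ℕ → Prop) (σ : Equiv.Perm (Fin n)) :
    (Finset.univ.filter fun p : Fin (n + 1) => ∀ i : Fin n, p = i.succ → Q (σ i + 1)).card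
      = 1 + ((Finset.range n).filter fun v => Q (v + 1)).card := by
  rw [Fin.card_filter_univ_succ, if_pos (fun i hi => absurd hi.symm (Fin.succ_ne_zero i)),
    add_comm]
  congr 1
  refine Finset.card_bij (fun i _ => (σ i : ℕ)) ?_ ?_ ?_
  · intro i hi
    simp only [Finset.mem_filter, Finset.mem_univ, true_and] at hi
    simpa using hi i rfl
  · intro i _ j _ h
    exact σ.injective (Fin.ext h)
  · intro v hv
    simp only [Finset.mem_filter, Finset.mem_range] at hv
    refine ⟨σ.symm ⟨v, hv.1⟩, ?_, by simp⟩
    simp only [Finset.mem_filter, Finset.mem_univ, true_and]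
    intro i hi
    rw [← Fin.succ_injective _ hi]
    simpa using hv.2

open Classical in
lemma card_good (n : ℕ) (Q : ℕ → Prop) :
    (Finset.univ.filter fun σ : Equiv.Perm (Fin n) => Good Q σ).card
      = ∏ m ∈ Finset.range n, (1 + ((Finset.range n).filter fun v => m < v ∧ Q v).card) := by
  induction n generalizing Q with
  | zero =>
    simp [Good]
  | succ n ih =>
    have h1 : (Finset.univ.filter fun σ : Equiv.Perm (Fin (n + 1)) => Good Q σ).card
        = (Finset.univ.filter fun x : Fin (n + 1) × Equiv.Perm (Fin n) =>
            Good Q (insMin x.1 x.2)).card := by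
      symm
      refine Finset.card_bij (fun x _ => insMin x.1 x.2) ?_ ?_ ?_
      · intro x hx
        simpa using hx
      · intro x _ y _ h
        exact (insMin_bijective n).1 h
      · intro τ hτ
        obtain ⟨x, rfl⟩ := (insMin_bijective n).2 τ
        exact ⟨x, by simpa using hτ, rfl⟩
    have shift : ∀ m : ℕ, ((Finset.range (n + 1)).filter fun v => m < v ∧ Q v).card
          = ((Finset.range n).filter fun v => m < v + 1 ∧ Q (v + 1)).card := by
      intro m
      rw [Finset.card_filter, Finset.card_filter, Finset.sum_range_succ', if_neg (by simp),
        add_zero]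
    rw [h1, Finset.card_filter, Fintype.sum_prod_type_right]
    simp_rw [good_insMin]
    rw [Finset.prod_range_succ', shift 0]
    simp_rw [shift]
    have h3 : ∀ σ : Equiv.Perm (Fin n), (∑ p : Fin (n + 1),
        if (Good (fun v => Q (v + 1)) σ ∧ ∀ i : Fin n, p = i.succ → Q (σ i + 1)) then 1 else 0)
        = (if Good (fun v => Q (v + 1)) σ then 1 else 0)
          * (1 + ((Finset.range n).filter fun v => Q (v + 1)).card) := by
      intro σ
      rw [← card_positions Q σ, Finset.card_filter]
      by_cases h : Good (fun v => Q (v + 1)) σ <;> simp [h]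
    simp_rw [h3]
    rw [← Finset.sum_mul, ← Finset.card_filter, ih]
    simp

/-! ### The product formula for `hatFactorial` -/

/-- The regrouping for a sorted list `l` with entries in `[a, N]`; `hatFactorial` is the case
`a = 1`. -/
lemma list_prod_eq (N : ℕ) (l : List ℕ) (a : ℕ) (haN : a ≤ N) (hs : l.Pairwise (· ≤ ·))
    (ha : ∀ x ∈ l, a ≤ x) (hN : ∀ x ∈ l, x ≤ N) :
    ∏ i ∈ Finset.range l.length,
        (l.length + 1 - i) ^ ((a :: l).getD (i + 1) 0 - (a :: l).getD i 0)
      = ∏ m ∈ Finset.Ico a N, (1 + l.countP (fun x => m < x)) := by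
  induction l generalizing a with
  | nil => simp
  | cons b l ih =>
    rw [List.pairwise_cons] at hs
    have hab : a ≤ b := ha b (by simp)
    have hbN : b ≤ N := hN b (by simp)
    rw [List.length_cons, Finset.prod_range_succ', ← Finset.prod_Ico_consecutive _ hab hbN,
      mul_comm]
    congr 1
    · have : ∀ m ∈ Finset.Ico a b,
          1 + (b :: l).countP (fun x => m < x) = l.length + 1 + 1 := by
        intro m hm
        rw [Finset.mem_Ico] at hm
        have : (b :: l).countP (fun x => m < x) = (b :: l).length := by
          rw [List.countP_eq_length]
          intro x hx
          rcases List.mem_cons.1 hx with rfl | hx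
          · simpa using hm.2
          · simpa using lt_of_lt_of_le hm.2 (hs.1 x hx)
        rw [this, List.length_cons]
        ring
      rw [Finset.prod_congr rfl this]
      simp
    · have h1 := ih b hbN hs.2 hs.1 (fun x hx => hN x (by simp [hx]))
      have h2 : ∀ m ∈ Finset.Ico b N, 1 + (b :: l).countP (fun x => m < x)
          = 1 + l.countP (fun x => m < x) := by
        intro m hm
        rw [Finset.mem_Ico] at hm
        rw [List.countP_cons_of_neg (by simpa using hm.1)]
      rw [Finset.prod_congr rfl h2, ← h1]
      refine Finset.prod_congr rfl fun i _ => ?_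
      have : l.length + 1 + 1 - (i + 1) = l.length + 1 - i := by omega
      rw [this]
      simp

lemma hatFactorial_eq_prod (n : ℕ) (J : Finset ℕ) (hJ : J ⊆ Finset.Icc 1 n) :
    hatFactorial J = ∏ m ∈ Finset.Ico 1 (n + 1), (1 + (J.filter fun x => m < x).card) := by
  have h := list_prod_eq (n + 1) (J.sort (· ≤ ·)) 1 (by omega) (Finset.pairwise_sort J (· ≤ ·))
    (fun x hx => (Finset.mem_Icc.1 (hJ ((Finset.mem_sort _).1 hx))).1)
    (fun x hx => by
      have := (Finset.mem_Icc.1 (hJ ((Finset.mem_sort _).1 hx))).2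
      omega)
  rw [Finset.length_sort] at h
  rw [hatFactorial, h]
  refine Finset.prod_congr rfl fun m _ => ?_
  congr 1
  rw [← Multiset.coe_countP, Finset.sort_eq, Multiset.countP_eq_card_filter]
  rfl

/-! ### Counting by `DT σ ⊆ J`, and inclusion–exclusion -/

lemma DT_subset_iff {n : ℕ} (σ : Equiv.Perm (Fin n)) (J : Finset ℕ) :
    DT σ ⊆ J ↔ Good (fun v => v + 1 ∈ J) σ := by
  simp only [DT, Finset.image_subset_iff, Finset.mem_filter, Finset.mem_univ, true_and, Good]
  exact ⟨fun h i j hj hlt => h i ⟨j, hj, hlt⟩, fun h i ⟨j, hj, hlt⟩ => h i j hj hlt⟩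

lemma card_DT_subset (n : ℕ) (J : Finset ℕ) (hJ : J ⊆ Finset.Icc 1 n) :
    (Finset.univ.filter fun σ : Equiv.Perm (Fin n) => DT σ ⊆ J).card = hatFactorial J := by
  classical
  simp_rw [DT_subset_iff]
  rw [hatFactorial_eq_prod n J hJ, Finset.prod_Ico_eq_prod_range]
  convert card_good n (fun v => v + 1 ∈ J) using 1
  refine Finset.prod_congr (by simp) fun m _ => ?_
  congr 1
  symm
  refine Finset.card_bij (fun v _ => v + 1) ?_ ?_ ?_
  · intro v hv
    simp only [Finset.mem_filter, Finset.mem_range] at hv ⊢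
    exact ⟨hv.2.2, by omega⟩
  · intro v _ w _ h
    omega
  · intro x hx
    simp only [Finset.mem_filter] at hx
    have hx' := Finset.mem_Icc.1 (hJ hx.1)
    refine ⟨x - 1, ?_, by omega⟩
    simp only [Finset.mem_filter, Finset.mem_range]
    refine ⟨by omega, by omega, ?_⟩
    rw [Nat.sub_add_cancel hx'.1]
    exact hx.1

lemma sum_signs (X D : Finset ℕ) :
    ∑ J ∈ X.powerset, (-1 : ℤ) ^ (X \ J).card * (if D ⊆ J then 1 else 0)
      = if D = X then 1 else 0 := by
  simp_rw [mul_ite, mul_one, mul_zero]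
  rw [← Finset.sum_filter]
  by_cases hD : D ⊆ X
  · have h1 : ∑ J ∈ X.powerset with D ⊆ J, (-1 : ℤ) ^ (X \ J).card
        = ∑ K ∈ (X \ D).powerset, (-1 : ℤ) ^ K.card := by
      -- complementation in `X` turns `D ⊆ J ⊆ X` into `K ⊆ X \ D`
      refine Finset.sum_bij' (fun J _ => X \ J) (fun K _ => X \ K) ?_ ?_ ?_ ?_ ?_
      · intro J hJ
        simp only [Finset.mem_filter, Finset.mem_powerset] at hJ ⊢
        exact Finset.sdiff_subset_sdiff le_rfl hJ.2
      · intro K hK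
        simp only [Finset.mem_filter, Finset.mem_powerset] at hK ⊢
        refine ⟨Finset.sdiff_subset, fun x hx => ?_⟩
        have := @hK x
        simp only [Finset.mem_sdiff] at this ⊢
        exact ⟨hD hx, fun h => (this h).2 hx⟩
      · intro J hJ
        simp only [Finset.mem_filter, Finset.mem_powerset] at hJ
        exact Finset.sdiff_sdiff_eq_self hJ.1
      · intro K hK
        rw [Finset.mem_powerset] at hK
        exact Finset.sdiff_sdiff_eq_self (hK.trans Finset.sdiff_subset)
      · intro J _
        rfl
    rw [h1, Finset.sum_powerset_neg_one_pow_card]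
    refine if_congr ?_ rfl rfl
    rw [Finset.sdiff_eq_empty_iff_subset]
    exact ⟨fun h => Finset.Subset.antisymm hD h, fun h => h.symm.subset⟩
  · rw [if_neg (fun h => hD h.subset), Finset.sum_eq_zero]
    intro J hJ
    simp only [Finset.mem_filter, Finset.mem_powerset] at hJ
    exact absurd (hJ.2.trans hJ.1) hD

/-- for `n ≥ 1` and `X ⊆ [n]`, the number of permutations `σ ∈ S_n` with
`DT(σ) = X` equals `Σ_{J ⊆ X} (−1)^{|X∖J|} · α(J)!̂`. -/
theorem stmt5 (n : ℕ) (hn : 1 ≤ n) (X : Finset ℕ) (hX : X ⊆ Finset.Icc 1 n) :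
    ((Finset.univ.filter fun σ : Equiv.Perm (Fin n) => DT σ = X).card : ℤ)
      = ∑ J ∈ X.powerset, (-1 : ℤ) ^ (X \ J).card * (hatFactorial J : ℤ) := by
  have h : ∀ J ∈ X.powerset, (-1 : ℤ) ^ (X \ J).card * (hatFactorial J : ℤ)
      = ∑ σ : Equiv.Perm (Fin n),
          (-1 : ℤ) ^ (X \ J).card * (if DT σ ⊆ J then 1 else 0) := by
    intro J hJ
    rw [← card_DT_subset n J ((Finset.mem_powerset.1 hJ).trans hX), Finset.card_filter,
      ← Finset.mul_sum]
    push_cast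
    rfl
  rw [Finset.sum_congr rfl h, Finset.sum_comm]
  simp_rw [sum_signs]
  rw [Finset.card_filter]
  push_cast
  rfl
end

section
/- Fix n ≥ 1 and a subset X = {x_1 < ⋯ < x_k} ⊆ [n]. Then the number of permutations σ ∈ S_n with DT(σ) ⊇ X equals (n − k)! · ∏_{i=1}^{k} (x_i − i). -/
/-- For a finite set `T = {t_1 < ⋯ < t_k} ⊆ ℕ`, the product `∏_{i=1}^{k} (t_i − i)` (in `ℤ`). -/
def chainProd (T : Finset ℕ) : ℤ :=
  ∏ i ∈ Finset.range T.card, (((T.sort (· ≤ ·)).getD i 0 : ℤ) - (i + 1))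

/-- The permutation of `n + 1` letters obtained from the word of `σ` by inserting the new largest
letter at position `p`. -/
def ins {n : ℕ} (p : Fin (n + 1)) (σ : Equiv.Perm (Fin n)) : Equiv.Perm (Fin (n + 1)) :=
  (finSuccEquiv' p).trans ((Equiv.optionCongr σ).trans (finSuccEquiv' (Fin.last n)).symm)

theorem ins_self {n : ℕ} (p : Fin (n + 1)) (σ : Equiv.Perm (Fin n)) :
    ins p σ p = Fin.last n := by
  simp [ins]

theorem ins_succAbove {n : ℕ} (p : Fin (n + 1)) (σ : Equiv.Perm (Fin n)) (i : Fin n) :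
    ins p σ (p.succAbove i) = (σ i).castSucc := by
  simp [ins]

theorem ins_bijective (n : ℕ) :
    Function.Bijective (fun q : Fin (n + 1) × Equiv.Perm (Fin n) => ins q.1 q.2) := by
  rw [Fintype.bijective_iff_injective_and_card]
  constructor
  · rintro ⟨p, σ⟩ ⟨q, τ⟩ h
    simp only at h
    have hpq : p = q := by
      apply (ins q τ).injective
      rw [ins_self, ← h, ins_self]
    subst hpq
    have : σ = τ := by
      ext i
      have h1 := ins_succAbove p σ i
      rw [h, ins_succAbove] at h1
      exact congrArg Fin.val (Fin.castSucc_injective _ h1.symm)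
    rw [this]
  · simp [Fintype.card_perm, Nat.factorial_succ]

theorem mem_DT_iff {n : ℕ} (σ : Equiv.Perm (Fin n)) (i : Fin n) :
    (σ i : ℕ) + 1 ∈ DT σ ↔ ∃ j : Fin n, (j : ℕ) = (i : ℕ) + 1 ∧ σ j < σ i := by
  simp only [DT, Finset.mem_image, Finset.mem_filter, Finset.mem_univ, true_and]
  constructor
  · rintro ⟨i', h, hi⟩
    have : i' = i := σ.injective (Fin.ext (by omega))
    rwa [← this]
  · intro h
    exact ⟨i, h, rfl⟩

/-- An old letter is a descent top after the insertion iff it was one before and the new maximum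
was not inserted immediately to its right. -/
theorem mem_DT_ins {n : ℕ} (p : Fin (n + 1)) (σ : Equiv.Perm (Fin n)) (i : Fin n) :
    (σ i : ℕ) + 1 ∈ DT (ins p σ) ↔ (σ i : ℕ) + 1 ∈ DT σ ∧ (p : ℕ) ≠ i + 1 := by
  have h := mem_DT_iff (ins p σ) (p.succAbove i)
  rw [ins_succAbove, Fin.val_castSucc] at h
  rw [h, mem_DT_iff]
  have hv : ∀ k : Fin n, ((p.succAbove k : Fin (n + 1)) : ℕ) =
      if (k : ℕ) < p then (k : ℕ) else k + 1 := by
    intro k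
    simp only [Fin.succAbove, Fin.lt_def, Fin.val_castSucc]
    split_ifs <;> simp
  constructor
  · rintro ⟨j, hj, hlt⟩
    rcases Fin.eq_self_or_eq_succAbove p j with rfl | ⟨k, rfl⟩
    · rw [ins_self] at hlt
      exact absurd hlt (not_lt.2 (Fin.le_last _))
    · rw [ins_succAbove, Fin.castSucc_lt_castSucc_iff] at hlt
      rw [hv, hv] at hj
      have hki : k ≠ i := by rintro rfl; exact lt_irrefl _ hlt
      refine ⟨⟨k, ?_, hlt⟩, ?_⟩ <;> split_ifs at hj <;> omega
  · rintro ⟨⟨k, hk, hlt⟩, hp⟩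
    refine ⟨p.succAbove k, ?_, ?_⟩
    · rw [hv, hv]
      split_ifs <;> omega
    · rwa [ins_succAbove, Fin.castSucc_lt_castSucc_iff]

theorem top_mem_DT_ins {n : ℕ} (p : Fin (n + 1)) (σ : Equiv.Perm (Fin n)) :
    n + 1 ∈ DT (ins p σ) ↔ (p : ℕ) ≠ n := by
  have h := mem_DT_iff (ins p σ) p
  rw [ins_self, Fin.val_last] at h
  rw [h]
  constructor
  · rintro ⟨j, hj, -⟩
    omega
  · intro hp
    refine ⟨⟨p + 1, by omega⟩, rfl, lt_of_le_of_ne (Fin.le_last _) ?_⟩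
    intro hlast
    rw [← ins_self p σ] at hlast
    have := congrArg Fin.val ((ins p σ).injective hlast)
    simp at this

/-- The insertion position at which the new maximum would prevent the (one-based) letter `x` from
being a descent top: immediately to the right of `x` when `x ≤ n`, and the final position when `x`
is the new maximum `n + 1`. -/
def forb {n : ℕ} (σ : Equiv.Perm (Fin n)) (x : ℕ) : Fin (n + 1) :=
  if h : x - 1 < n then (σ.symm ⟨x - 1, h⟩).succ else Fin.last n

theorem forb_apply {n : ℕ} (σ : Equiv.Perm (Fin n)) (i : Fin n) :
    forb σ ((σ i : ℕ) + 1) = i.succ := by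
  simp [forb]

theorem forb_top {n : ℕ} (σ : Equiv.Perm (Fin n)) : forb σ (n + 1) = Fin.last n := by
  simp [forb]

theorem exists_letter {n : ℕ} (σ : Equiv.Perm (Fin n)) {x : ℕ} (hx : x ∈ Finset.Icc 1 (n + 1)) :
    x = n + 1 ∨ ∃ i : Fin n, x = (σ i : ℕ) + 1 := by
  rw [Finset.mem_Icc] at hx
  by_cases h : x = n + 1
  · exact Or.inl h
  · refine Or.inr ⟨σ.symm ⟨x - 1, by omega⟩, ?_⟩
    rw [Equiv.apply_symm_apply]
    simp only
    omega

theorem subset_DT_ins {n : ℕ} {X : Finset ℕ} (hX : X ⊆ Finset.Icc 1 (n + 1)) (p : Fin (n + 1))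
    (σ : Equiv.Perm (Fin n)) :
    X ⊆ DT (ins p σ) ↔ X.erase (n + 1) ⊆ DT σ ∧ p ∉ X.image (forb σ) := by
  have key : ∀ x ∈ X, (x ∈ DT (ins p σ) ↔ (x ≠ n + 1 → x ∈ DT σ) ∧ forb σ x ≠ p) := by
    intro x hx
    rcases exists_letter σ (hX hx) with rfl | ⟨i, rfl⟩
    · have hp : Fin.last n ≠ p ↔ (p : ℕ) ≠ n := by
        rw [ne_comm, Fin.ne_iff_vne, Fin.val_last]
      simp [top_mem_DT_ins, forb_top, hp]
    · have : (σ i : ℕ) + 1 ≠ n + 1 := by have := (σ i).isLt; omega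
      have hp : i.succ ≠ p ↔ (p : ℕ) ≠ i + 1 := by
        rw [ne_comm, Fin.ne_iff_vne, Fin.val_succ]
      rw [mem_DT_ins, forb_apply, hp, imp_iff_right this]
  constructor
  · intro h
    refine ⟨fun x hx => ?_, fun hp => ?_⟩
    · rw [Finset.mem_erase] at hx
      exact ((key x hx.2).1 (h hx.2)).1 hx.1
    · obtain ⟨x, hx, hxp⟩ := Finset.mem_image.1 hp
      exact ((key x hx).1 (h hx)).2 hxp
  · rintro ⟨h1, h2⟩ x hx
    exact (key x hx).2 ⟨fun hne => h1 (Finset.mem_erase.2 ⟨hne, hx⟩),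
      fun hxp => h2 (Finset.mem_image.2 ⟨x, hx, hxp⟩)⟩

/-- Distinct elements of `X` forbid distinct positions; the final position is not forbidden by an
old letter, since that letter would be the last one of `σ` and so not a descent top. -/
theorem forb_injOn {n : ℕ} {X : Finset ℕ} (hX : X ⊆ Finset.Icc 1 (n + 1))
    (σ : Equiv.Perm (Fin n)) (h : X.erase (n + 1) ⊆ DT σ) : Set.InjOn (forb σ) X := by
  have hlast : ∀ i : Fin n, (σ i : ℕ) + 1 ∈ X → i.succ ≠ Fin.last n := by
    intro i hi hil
    have hne : (σ i : ℕ) + 1 ≠ n + 1 := by have := (σ i).isLt; omega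
    obtain ⟨j, hj, -⟩ := (mem_DT_iff σ i).1 (h (Finset.mem_erase.2 ⟨hne, hi⟩))
    have := congrArg Fin.val hil
    rw [Fin.val_succ, Fin.val_last] at this
    omega
  intro x hx y hy hxy
  rw [Finset.mem_coe] at hx hy
  rcases exists_letter σ (hX hx) with rfl | ⟨i, rfl⟩ <;>
    rcases exists_letter σ (hX hy) with rfl | ⟨j, rfl⟩
  · rfl
  · rw [forb_top, forb_apply] at hxy
    exact absurd hxy.symm (hlast j hy)
  · rw [forb_top, forb_apply] at hxy
    exact absurd hxy (hlast i hx)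
  · rw [forb_apply, forb_apply] at hxy
    rw [Fin.succ_injective _ hxy]

theorem card_succ {n : ℕ} {X : Finset ℕ} (hX : X ⊆ Finset.Icc 1 (n + 1)) :
    (Finset.univ.filter fun σ : Equiv.Perm (Fin (n + 1)) => X ⊆ DT σ).card
      = (n + 1 - X.card) *
        (Finset.univ.filter fun σ : Equiv.Perm (Fin n) => X.erase (n + 1) ⊆ DT σ).card := by
  have h1 : (Finset.univ.filter fun σ : Equiv.Perm (Fin (n + 1)) => X ⊆ DT σ).card
      = (Finset.univ.filter fun q : Fin (n + 1) × Equiv.Perm (Fin n) =>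
          X ⊆ DT (ins q.1 q.2)).card := by
    refine (Finset.card_bijective _ (ins_bijective n) ?_).symm
    intro q
    simp
  have h2 : (Finset.univ.filter fun q : Fin (n + 1) × Equiv.Perm (Fin n) =>
          X ⊆ DT (ins q.1 q.2))
      = (Finset.univ.filter fun σ : Equiv.Perm (Fin n) => X.erase (n + 1) ⊆ DT σ).biUnion
          (fun σ => (X.image (forb σ))ᶜ ×ˢ {σ}) := by
    ext ⟨p, σ⟩
    simp only [Finset.mem_filter, Finset.mem_univ, true_and, subset_DT_ins hX,
      Finset.mem_biUnion, Finset.mem_product, Finset.mem_compl, Finset.mem_singleton]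
    constructor
    · rintro ⟨h, hp⟩
      exact ⟨σ, h, hp, rfl⟩
    · rintro ⟨τ, h, hp, rfl⟩
      exact ⟨h, hp⟩
  rw [h1, h2, Finset.card_biUnion, Finset.sum_const_nat (m := n + 1 - X.card), mul_comm]
  · intro σ hσ
    rw [Finset.mem_filter] at hσ
    rw [Finset.card_product, Finset.card_singleton, mul_one, Finset.card_compl, Fintype.card_fin,
      Finset.card_image_of_injOn (forb_injOn hX σ hσ.2)]
  · intro σ _ τ _ hne
    refine Finset.disjoint_left.2 ?_
    rintro ⟨p, ρ⟩ h h'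
    simp only [Finset.mem_product, Finset.mem_singleton] at h h'
    exact hne (h.2.symm.trans h'.2)

theorem sort_insert_max {X : Finset ℕ} {m : ℕ} (h : ∀ x ∈ X, x < m) :
    (insert m X).sort (· ≤ ·) = X.sort (· ≤ ·) ++ [m] := by
  have hm : m ∉ X := fun hm => lt_irrefl _ (h m hm)
  refine List.Perm.eq_of_pairwise' (r := (· ≤ ·)) ?_ ?_ ?_
  · exact Finset.pairwise_sort _ _
  · rw [List.pairwise_append]
    refine ⟨Finset.pairwise_sort _ _, List.pairwise_singleton _ _, ?_⟩
    intro a ha b hb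
    rw [Finset.mem_sort] at ha
    rw [List.mem_singleton] at hb
    exact hb ▸ (h a ha).le
  · rw [List.perm_ext_iff_of_nodup (Finset.sort_nodup _ _)]
    · intro a
      simp [or_comm]
    · rw [List.nodup_append]
      refine ⟨Finset.sort_nodup _ _, List.nodup_singleton _, ?_⟩
      intro a ha b hb
      rw [Finset.mem_sort] at ha
      rw [List.mem_singleton] at hb
      exact hb ▸ (h a ha).ne

theorem chainProd_insert_max {X : Finset ℕ} {m : ℕ} (h : ∀ x ∈ X, x < m) :
    chainProd (insert m X) = chainProd X * ((m : ℤ) - (X.card + 1)) := by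
  have hm : m ∉ X := fun hm => lt_irrefl _ (h m hm)
  have hlen : (X.sort (· ≤ ·)).length = X.card := Finset.length_sort _
  rw [chainProd, chainProd, sort_insert_max h, Finset.card_insert_of_notMem hm,
    Finset.prod_range_succ]
  congr 1
  · refine Finset.prod_congr rfl fun i hi => ?_
    rw [Finset.mem_range] at hi
    rw [List.getD_append _ _ _ _ (by omega)]
  · rw [List.getD_append_right _ _ _ _ (by omega), hlen]
    simp

/-- The counting formula, including the case `n = 0` from which the induction starts. -/
theorem card_superset_DT (n : ℕ) : ∀ X : Finset ℕ, X ⊆ Finset.Icc 1 n →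
    ((Finset.univ.filter fun σ : Equiv.Perm (Fin n) => X ⊆ DT σ).card : ℤ)
      = (Nat.factorial (n - X.card) : ℤ) * chainProd X := by
  induction n with
  | zero =>
    intro X hX
    have : X = ∅ := by simpa using hX
    subst this
    simp [chainProd]
  | succ n ih =>
    intro X hX
    have hX' : X.erase (n + 1) ⊆ Finset.Icc 1 n := by
      intro x hx
      rw [Finset.mem_erase] at hx
      have := Finset.mem_Icc.1 (hX hx.2)
      rw [Finset.mem_Icc]
      omega
    have hc : (X.erase (n + 1)).card ≤ n := by
      simpa using Finset.card_le_card hX'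
    rw [card_succ hX, Nat.cast_mul, ih _ hX']
    by_cases hmem : n + 1 ∈ X
    · have hcard := Finset.card_erase_add_one hmem
      have hprod := chainProd_insert_max (X := X.erase (n + 1)) (m := n + 1) (by
        intro x hx
        have := Finset.mem_Icc.1 (hX' hx)
        omega)
      rw [Finset.insert_erase hmem] at hprod
      rw [hprod, ← hcard, Nat.add_sub_add_right, Nat.cast_sub hc]
      push_cast
      ring
    · rw [Finset.erase_eq_of_notMem hmem] at hc ⊢
      rw [Nat.succ_sub hc, Nat.factorial_succ]
      push_cast
      ring

/-- for `n ≥ 1` and `X = {x_1 < ⋯ < x_k} ⊆ [n]`, the number of permutations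
`σ ∈ S_n` with `DT(σ) ⊇ X` equals `(n − k)! · ∏_{i=1}^{k} (x_i − i)`. -/
theorem stmt10 (n : ℕ) (hn : 1 ≤ n) (X : Finset ℕ) (hX : X ⊆ Finset.Icc 1 n) :
    ((Finset.univ.filter fun σ : Equiv.Perm (Fin n) => X ⊆ DT σ).card : ℤ)
      = (Nat.factorial (n - X.card) : ℤ) * chainProd X := by
  exact card_superset_DT n X hX
end
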